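/- arXiv:1812.11224 — 5 statements merged into one kernel-verified Lean document; each statement's English description precedes it below -/
import Mathlib

section
/- The Magic Lemma (Benjamini–Schramm): There exists a universal constant A > 0 such that for every δ ∈ (0, 1/2), every finite set C ⊆ ℝ² with at least two points, and every integer s ≥ 2, the number of (δ,s)-supported points of C is at most A·|C|·δ^{−2}·log(δ^{−1}) / s. -/
open scoped Classical

/-!
The Magic Lemma of Benjamini and Schramm.

The plane `ℝ²` is modelled as `ℂ` (with its Euclidean distance).  For a finite
set `C` of points (with at least two points) and `w ∈ C`, the isolation radius
`ρ_w` is the minimal distance from `w` to another point of `C`.  Given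
`δ ∈ (0,1)` and an integer `s ≥ 2`, the point `w` is `(δ,s)`-supported if for
every `p ∈ ℂ` there are at least `s` points of `C` in the closed disc of
radius `δ⁻¹ ρ_w` around `w` and outside the open disc of radius `δ ρ_w`
around `p`.
-/

/-- The isolation radius of a point `w` of the finite set `C`. -/
noncomputable def isolationRadius (C : Finset ℂ) (w : ℂ) : ℝ :=
  sInf {d : ℝ | ∃ v ∈ C, v ≠ w ∧ d = dist v w}

/-- `w` is `(δ,s)`-supported in `C`. -/
def IsSupported (C : Finset ℂ) (δ : ℝ) (s : ℕ) (w : ℂ) : Prop :=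
  ∀ p : ℂ, s ≤ (C.filter (fun v =>
    dist v w ≤ δ⁻¹ * isolationRadius C w ∧
    δ * isolationRadius C w ≤ dist v p)).card

/-!
Cover the plane by four hierarchies of nested triadic grids, shifted so that every disc lies inside
a cell of comparable size in one of them. If `w` is supported, take such a cell for the disc of
radius `δ⁻¹ ρ_w`, and subdivide it `L ≈ log δ⁻¹` times: the subcells have diameter less than
`δ ρ_w`, so each of them misses at least `s` points of the cell. Assign to each cell with `m` points
the mass `min (2 m) s` and let the potential of a grid be its total mass. Merging subcells never
increases the potential, merging them into a cell as above loses at least `s`, and the potential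
stays between `0` and `2 |C|`; telescoping over all scales leaves `O(L |C| / s)` such cells. As the
points sharing a cell of size comparable to `δ⁻¹ ρ_w` are `ρ_w`-separated, there are `O(δ⁻²)` of
them.
-/

open Finset

/-! ### Split cells in a hierarchy of partitions -/

theorem sum_le_mul_of_add_le_sub {P c : ℤ → ℕ} {B L : ℕ} (hP : ∀ n, P n ≤ B)
    (hc : ∀ n, P n + c n ≤ P (n - L)) (N : Finset ℤ) : ∑ n ∈ N, c n ≤ L * B := by
  obtain ⟨a, ha⟩ := N.bddBelow
  obtain ⟨b, hb⟩ := N.bddAbove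
  have hN : N ⊆ Ico a (b + 1) := fun n hn => mem_Ico.2 ⟨ha hn, Int.lt_add_one_of_le (hb hn)⟩
  have hshift : Ico (a - L) (b + 1 - L) ⊆ Ico (a - L) a ∪ Ico a (b + 1) := fun n => by
    simp only [mem_union, mem_Ico]
    lia
  have htelescope : ∑ n ∈ Ico a (b + 1), c n + ∑ n ∈ Ico a (b + 1), P n ≤
      L * B + ∑ n ∈ Ico a (b + 1), P n :=
    calc ∑ n ∈ Ico a (b + 1), c n + ∑ n ∈ Ico a (b + 1), P n
        ≤ ∑ n ∈ Ico a (b + 1), P (n - L) := by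
          rw [← sum_add_distrib]
          exact sum_le_sum fun n _ => (add_comm _ _).trans_le (hc n)
      _ = ∑ n ∈ Ico (a - L) (b + 1 - L), P n := sum_Ico_add' P a (b + 1) (-L)
      _ ≤ ∑ n ∈ Ico (a - L) a ∪ Ico a (b + 1), P n := sum_le_sum_of_subset hshift
      _ ≤ ∑ n ∈ Ico (a - L) a, P n + ∑ n ∈ Ico a (b + 1), P n :=
          (sum_union (Ico_disjoint_Ico_consecutive _ _ _)).le
      _ ≤ L * B + ∑ n ∈ Ico a (b + 1), P n := by
          gcongr
          simpa using sum_le_card_nsmul (Ico (a - (L : ℤ)) a) P B fun n _ => hP n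
  exact (sum_le_sum_of_subset hN).trans (Nat.le_of_add_le_add_right htelescope)

section Partition

variable {α ι κ : Type*}

/-- The mass `min (2 m) s` of a cell with `m` points. The factor `2` is what makes merging cells
lose `s` units of mass as soon as each of them misses `s` points of the union. -/
def cappedMass (s m : ℕ) : ℕ := min (2 * m) s

theorem cappedMass_add_le (s m n : ℕ) :
    cappedMass s (m + n) ≤ cappedMass s m + cappedMass s n := by
  unfold cappedMass
  lia

theorem cappedMass_sum_le (s : ℕ) (P : Finset ι) (m : ι → ℕ) :
    cappedMass s (∑ p ∈ P, m p) ≤ ∑ p ∈ P, cappedMass s (m p) :=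
  le_sum_of_subadditive (cappedMass s) (by simp [cappedMass]) (cappedMass_add_le s) P m

theorem cappedMass_sum_add_le {s : ℕ} {P : Finset ι} {m : ι → ℕ} (hP : P.Nonempty)
    (h : ∀ p ∈ P, s + m p ≤ ∑ p ∈ P, m p) :
    cappedMass s (∑ p ∈ P, m p) + s ≤ ∑ p ∈ P, cappedMass s (m p) := by
  by_cases! hfull : ∃ p ∈ P, s ≤ 2 * m p
  · obtain ⟨p, hp, hsp⟩ := hfull
    have hothers := cappedMass_sum_le s (P.erase p) m
    have hmiss : s ≤ ∑ p ∈ P.erase p, m p := by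
      have hp_misses := h p hp
      rw [← add_sum_erase P m hp] at hp_misses
      lia
    rw [← add_sum_erase P (fun p => cappedMass s (m p)) hp]
    unfold cappedMass at *
    lia
  · obtain ⟨p, hp⟩ := hP
    have huncapped : ∑ p ∈ P, cappedMass s (m p) = 2 * ∑ p ∈ P, m p := by
      rw [mul_sum]
      exact sum_congr rfl fun p hp => min_eq_left (hfull p hp).le
    have hp_misses := h p hp
    rw [huncapped]
    unfold cappedMass
    lia

theorem factorsThrough_of_le {f : ℤ → α → ι} (hf : ∀ n, (f (n + 1)).FactorsThrough (f n)) {m n : ℤ}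
    (hmn : m ≤ n) : (f n).FactorsThrough (f m) := by
  induction n, hmn using Int.leInduction with
  | base => exact Function.FactorsThrough.rfl
  | succ n _ ih => exact fun _ _ h => hf n (ih h)

variable [DecidableEq ι] [DecidableEq κ]

/-- The total capped mass of the partition of `C` into the fibres of `f`. -/
def potential (C : Finset α) (s : ℕ) (f : α → ι) : ℕ :=
  ∑ p ∈ C.image f, cappedMass s #{v ∈ C | f v = p}

/-- Every cell of the partition into fibres of `f` that meets `C` misses at least `s` points
of `C`. -/
def IsSplit (C : Finset α) (s : ℕ) (f : α → ι) : Prop :=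
  ∀ u ∈ C, s ≤ #{v ∈ C | f v ≠ f u}

/-- The cells of the coarse partition `g` whose points of `C` are split by the fine
partition `f`. -/
noncomputable def splitCells (C : Finset α) (s : ℕ) (f : α → ι) (g : α → κ) : Finset κ :=
  {q ∈ C.image g | IsSplit {v ∈ C | g v = q} s f}

theorem potential_le (C : Finset α) (s : ℕ) (f : α → ι) : potential C s f ≤ 2 * #C := by
  rw [card_eq_sum_card_image f C, mul_sum]
  exact sum_le_sum fun _ _ => min_le_left _ _

theorem cappedMass_card_le_potential (C : Finset α) (s : ℕ) (f : α → ι) :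
    cappedMass s #C ≤ potential C s f := by
  rw [card_eq_sum_card_image f C]
  exact cappedMass_sum_le _ _ _

theorem IsSplit.cappedMass_card_add_le_potential {C : Finset α} {s : ℕ} {f : α → ι}
    (h : IsSplit C s f) (hC : C.Nonempty) : cappedMass s #C + s ≤ potential C s f := by
  rw [card_eq_sum_card_image f C]
  refine cappedMass_sum_add_le (hC.image f) (forall_mem_image.2 fun u hu => ?_)
  rw [← card_eq_sum_card_image f C, ← card_filter_add_card_filter_not (s := C) (fun v => f v = f u),
    add_comm]
  exact Nat.add_le_add_left (h u hu) _

theorem potential_eq_sum_of_factorsThrough (C : Finset α) (s : ℕ) {f : α → ι} {g : α → κ}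
    (hgf : g.FactorsThrough f) :
    potential C s f = ∑ q ∈ C.image g, potential {v ∈ C | g v = q} s f := by
  have himage : C.image f = (C.image g).biUnion fun q => image f {v ∈ C | g v = q} := by
    rw [← biUnion_image, image_biUnion_filter_eq]
  have hdisjoint : (C.image g : Set κ).PairwiseDisjoint fun q => image f {v ∈ C | g v = q} := by
    refine fun q _ r _ hqr => disjoint_left.2 fun p hp hp' => hqr ?_
    obtain ⟨u, hu, rfl⟩ := mem_image.1 hp
    obtain ⟨v, hv, hvu⟩ := mem_image.1 hp'
    rw [← (mem_filter.1 hu).2, ← (mem_filter.1 hv).2, hgf hvu]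
  rw [potential, himage, sum_biUnion hdisjoint]
  refine sum_congr rfl fun q _ => sum_congr rfl fun p hp => ?_
  obtain ⟨u, hu, rfl⟩ := mem_image.1 hp
  rw [filter_filter]
  congr 2
  refine filter_congr fun v _ => (and_iff_right_of_imp fun hvu => ?_).symm
  rw [hgf hvu, (mem_filter.1 hu).2]

theorem potential_add_mul_card_splitCells_le (C : Finset α) (s : ℕ) {f : α → ι} {g : α → κ}
    (hgf : g.FactorsThrough f) :
    potential C s g + s * #(splitCells C s f g) ≤ potential C s f := by
  rw [potential_eq_sum_of_factorsThrough C s hgf, splitCells, card_filter, mul_sum, potential,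
    ← sum_add_distrib]
  refine sum_le_sum fun q hq => ?_
  have hne : {v ∈ C | g v = q}.Nonempty := fiber_nonempty_iff_mem_image.2 hq
  split_ifs with hsplit
  · simpa using hsplit.cappedMass_card_add_le_potential hne
  · simpa using cappedMass_card_le_potential _ s f

theorem mul_sum_card_splitCells_le (C : Finset α) (s L : ℕ) {f : ℤ → α → ι}
    (hf : ∀ n, (f (n + 1)).FactorsThrough (f n)) (N : Finset ℤ) :
    s * ∑ n ∈ N, #(splitCells C s (f (n - L)) (f n)) ≤ L * (2 * #C) := by
  rw [mul_sum]
  exact sum_le_mul_of_add_le_sub (fun n => potential_le C s (f n))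
    (fun n => potential_add_mul_card_splitCells_le C s (factorsThrough_of_le hf (by lia))) N

end Partition

/-! ### Shifted triadic grids -/

/-- The index of the interval containing `x` in the grid of mesh `3 ^ n` shifted by `σ / 2` meshes.
As `σ / 2 ≡ 3 σ / 2` modulo `1`, a grid is a refinement of the next one with the same `σ`. -/
noncomputable def gridIndex (σ n : ℤ) (x : ℝ) : ℤ := ⌊x / 3 ^ n + σ / 2⌋

/-- The index of the square containing `v` in the planar grid of mesh `3 ^ n` whose two axes are
shifted by `σ.1 / 2` and `σ.2 / 2` meshes. -/
noncomputable def gridCell (σ : ℤ × ℤ) (n : ℤ) (v : ℂ) : ℤ × ℤ :=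
  (gridIndex σ.1 n v.re, gridIndex σ.2 n v.im)

/-- The four planar shifts, by zero or half a mesh along each axis. -/
def gridShifts : Finset (ℤ × ℤ) := {0, 1} ×ˢ {0, 1}

theorem gridIndex_add_one (σ n : ℤ) (x : ℝ) :
    gridIndex σ (n + 1) x = (gridIndex σ n x + σ) / 3 := by
  have hcoord : x / 3 ^ (n + 1) + σ / 2 = (x / 3 ^ n + σ / 2 + σ) / (3 : ℕ) := by
    rw [zpow_add_one₀ (by norm_num)]
    field_simp
    push_cast
    ring
  rw [gridIndex, hcoord, Int.floor_div_natCast, Int.floor_add_intCast, gridIndex, Nat.cast_ofNat]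

theorem gridCell_add_one_factorsThrough (σ : ℤ × ℤ) (n : ℤ) :
    (gridCell σ (n + 1)).FactorsThrough (gridCell σ n) := by
  intro v w h
  simp only [gridCell, Prod.mk.injEq] at h
  simp only [gridCell, gridIndex_add_one, h]

/-- The boundary points of the two grids alternate at distance half a mesh, so one of the two grids
has no boundary point within a quarter of a mesh of `x`. -/
theorem exists_gridIndex_eq (n : ℤ) (x : ℝ) :
    ∃ σ ∈ ({0, 1} : Finset ℤ), ∀ y : ℝ, |y - x| < 3 ^ n / 4 →
      gridIndex σ n y = gridIndex σ n x := by
  set u := x / 3 ^ n with hu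
  obtain ⟨σ, hσ, j, hj⟩ : ∃ σ ∈ ({0, 1} : Finset ℤ), ∃ j : ℤ, round (2 * u) + σ = 2 * j + 1 := by
    obtain ⟨j, hj | hj⟩ := Int.even_or_odd' (round (2 * u))
    · exact ⟨1, by simp, j, by rw [hj]⟩
    · exact ⟨0, by simp, j, by rw [hj, add_zero]⟩
  have hround := abs_le.1 (abs_sub_round (2 * u))
  have hj' : (round (2 * u) : ℝ) + σ = 2 * j + 1 := mod_cast hj
  have hindex : ∀ y : ℝ, |y / 3 ^ n - u| < 1 / 4 → gridIndex σ n y = j := fun y hy => by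
    have hy := abs_lt.1 hy
    rw [gridIndex, Int.floor_eq_iff]
    constructor <;> linarith
  refine ⟨σ, hσ, fun y hy => ?_⟩
  rw [hindex x (by rw [← hu, sub_self, abs_zero]; norm_num), hindex y]
  rw [hu, ← sub_div, abs_div, abs_of_pos (a := 3 ^ n) (by positivity), div_lt_iff₀ (by positivity)]
  linarith

theorem exists_gridCell_eq (n : ℤ) (w : ℂ) :
    ∃ σ ∈ gridShifts, ∀ v, dist v w < 3 ^ n / 4 → gridCell σ n v = gridCell σ n w := by
  obtain ⟨σ, hσ, hre⟩ := exists_gridIndex_eq n w.re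
  obtain ⟨τ, hτ, him⟩ := exists_gridIndex_eq n w.im
  refine ⟨(σ, τ), mk_mem_product hσ hτ, fun v hv => ?_⟩
  rw [Complex.dist_eq] at hv
  exact Prod.ext (hre _ ((Complex.abs_re_le_norm (v - w)).trans_lt hv))
    (him _ ((Complex.abs_im_le_norm (v - w)).trans_lt hv))

theorem mul_abs_sub_lt_of_floor_eq {K r t x y : ℝ} (hK : 0 ≤ K) (hr : 0 < r)
    (h : ⌊K * (x / r + t)⌋ = ⌊K * (y / r + t)⌋) : K * |x - y| < r := by
  have habs := Int.abs_sub_lt_one_of_floor_eq_floor h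
  rwa [← mul_sub, add_sub_add_right_eq_sub, ← sub_div, mul_div_assoc', abs_div, abs_mul,
    abs_of_nonneg hK, abs_of_pos hr, div_lt_one hr] at habs

theorem mul_dist_lt_of_floor_eq {K r a b : ℝ} {v w : ℂ} (hK : 0 ≤ K) (hr : 0 < r)
    (hre : ⌊K * (v.re / r + a)⌋ = ⌊K * (w.re / r + a)⌋)
    (him : ⌊K * (v.im / r + b)⌋ = ⌊K * (w.im / r + b)⌋) : K * dist v w < 2 * r :=
  calc K * dist v w ≤ K * (|v.re - w.re| + |v.im - w.im|) := by
        gcongr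
        simpa only [Complex.dist_eq, Complex.sub_re, Complex.sub_im] using
            Complex.norm_le_abs_re_add_abs_im (v - w)
    _ = K * |v.re - w.re| + K * |v.im - w.im| := mul_add _ _ _
    _ < r + r :=
        add_lt_add (mul_abs_sub_lt_of_floor_eq hK hr hre) (mul_abs_sub_lt_of_floor_eq hK hr him)
    _ = 2 * r := (two_mul r).symm

theorem dist_lt_of_gridCell_eq {σ : ℤ × ℤ} {n : ℤ} {v w : ℂ}
    (h : gridCell σ n v = gridCell σ n w) : dist v w < 2 * 3 ^ n := by
  obtain ⟨hre, him⟩ := Prod.mk.inj h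
  simpa only [one_mul] using mul_dist_lt_of_floor_eq zero_le_one (by positivity)
    (by simpa only [one_mul, gridIndex] using hre) (by simpa only [one_mul, gridIndex] using him)

theorem floor_natCast_mul_mem_Ico {K : ℕ} (hK : 0 < K) (x : ℝ) :
    ⌊K * x⌋ ∈ Ico (K * ⌊x⌋) (K * ⌊x⌋ + K) := by
  rw [mem_Ico, Int.le_floor, Int.floor_lt]
  push_cast
  constructor
  · gcongr
    exact Int.floor_le x
  · rw [← mul_add_one]
    gcongr
    exact Int.lt_floor_add_one x

/-- Subdivide the cell into `K ^ 2` squares, each of diameter less than `2 * 3 ^ n / K`. -/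
theorem card_le_sq_of_gridCell_eq {σ q : ℤ × ℤ} {n : ℤ} {K : ℕ} {S : Finset ℂ} (hK : 0 < K)
    (hcell : ∀ w ∈ S, gridCell σ n w = q)
    (hsep : (S : Set ℂ).Pairwise fun v w => 2 * 3 ^ n ≤ K * dist v w) : #S ≤ K ^ 2 := by
  let subcell (w : ℂ) : ℤ × ℤ :=
    (⌊K * (w.re / 3 ^ n + σ.1 / 2)⌋, ⌊K * (w.im / 3 ^ n + σ.2 / 2)⌋)
  let subcells := Ico (K * q.1) (K * q.1 + K) ×ˢ Ico (K * q.2) (K * q.2 + K)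
  have hmaps : Set.MapsTo subcell S subcells := fun w hw => by
    obtain rfl := hcell w hw
    exact mk_mem_product (floor_natCast_mul_mem_Ico hK _) (floor_natCast_mul_mem_Ico hK _)
  have hinj : Set.InjOn subcell S := fun v hv w hw h => by
    obtain ⟨hre, him⟩ := Prod.mk.inj h
    by_contra hvw
    exact (hsep hv hw hvw).not_gt
      (mul_dist_lt_of_floor_eq (Nat.cast_nonneg K) (by positivity) hre him)
  calc #S ≤ #subcells := card_le_card_of_injOn subcell hmaps hinj
    _ = K ^ 2 := by simp [subcells, card_product, sq]

/-! ### Supported points -/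

theorem isolationRadius_le_dist {C : Finset ℂ} {v w : ℂ} (hv : v ∈ C) (hvw : v ≠ w) :
    isolationRadius C w ≤ dist v w :=
  csInf_le ⟨0, by rintro _ ⟨u, -, -, rfl⟩; exact dist_nonneg⟩ ⟨v, hv, hvw, rfl⟩

theorem isolationRadius_pos {C : Finset ℂ} (hC : 2 ≤ #C) (w : ℂ) : 0 < isolationRadius C w := by
  have hfinite : {d : ℝ | ∃ v ∈ C, v ≠ w ∧ d = dist v w}.Finite := by
    refine (C.finite_toSet.image fun v => dist v w).subset ?_
    rintro _ ⟨v, hv, -, rfl⟩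
    exact Set.mem_image_of_mem _ hv
  obtain ⟨u, hu, huw⟩ := exists_mem_ne hC w
  have hnonempty : {d : ℝ | ∃ v ∈ C, v ≠ w ∧ d = dist v w}.Nonempty := ⟨_, u, hu, huw, rfl⟩
  obtain ⟨v, -, hvw, hdist⟩ := hnonempty.csInf_mem hfinite
  exact (dist_pos.2 hvw).trans_eq hdist.symm

theorem IsSupported.mem_splitCells {ι κ : Type*} [DecidableEq ι] [DecidableEq κ] {C : Finset ℂ}
    {δ : ℝ} {s : ℕ} {w : ℂ} {f : ℂ → ι} {g : ℂ → κ} (hs : IsSupported C δ s w) (hw : w ∈ C)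
    (hf : ∀ u v, f v = f u → dist v u < δ * isolationRadius C w)
    (hg : ∀ v, dist v w ≤ δ⁻¹ * isolationRadius C w → g v = g w) :
    g w ∈ splitCells C s f g := by
  refine mem_filter.2 ⟨mem_image_of_mem g hw, fun u _ => (hs u).trans ?_⟩
  rw [filter_filter]
  refine card_le_card (monotone_filter_right C ?_)
  rintro v - ⟨hvw, hvu⟩
  exact ⟨hg v hvw, fun h => (hf u v h).not_ge hvu⟩

theorem IsSupported.exists_gridCell_mem_splitCells {C : Finset ℂ} {δ : ℝ} {s L : ℕ} {w : ℂ}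
    (hs : IsSupported C δ s w) (hδ : 0 < δ) (hC : 2 ≤ #C) (hw : w ∈ C)
    (hL : 24 * δ⁻¹ ^ 2 ≤ 3 ^ L) :
    ∃ σ ∈ gridShifts, ∃ n : ℤ,
      gridCell σ n w ∈ splitCells C s (gridCell σ (n - L)) (gridCell σ n) ∧
        δ * 3 ^ n ≤ 12 * isolationRadius C w := by
  have hρ := isolationRadius_pos hC w
  set ρ := isolationRadius C w
  obtain ⟨m, hm, hm'⟩ :=
    exists_mem_Ico_zpow (show 0 < 4 * (δ⁻¹ * ρ) by positivity) (by norm_num : (1 : ℝ) < 3)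
  have hmesh : δ * 3 ^ (m + 1) ≤ 12 * ρ :=
    calc δ * 3 ^ (m + 1) = 3 * δ * 3 ^ m := by rw [zpow_add_one₀ (by norm_num)]; ring
      _ ≤ 3 * δ * (4 * (δ⁻¹ * ρ)) := by gcongr
      _ = 12 * ρ := by field_simp; ring
  have hsubmesh : 2 * (3 : ℝ) ^ (m + 1 - (L : ℤ)) ≤ δ * ρ := by
    rw [zpow_sub₀ (by norm_num), zpow_natCast, mul_div_assoc', div_le_iff₀ (by positivity)]
    calc 2 * (3 : ℝ) ^ (m + 1) = 2 * δ⁻¹ * (δ * 3 ^ (m + 1)) := by field_simp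
      _ ≤ 2 * δ⁻¹ * (12 * ρ) := by gcongr
      _ = δ * ρ * (24 * δ⁻¹ ^ 2) := by field_simp; ring
      _ ≤ δ * ρ * 3 ^ L := by gcongr
  obtain ⟨σ, hσ, hdisc⟩ := exists_gridCell_eq (m + 1) w
  refine ⟨σ, hσ, m + 1, hs.mem_splitCells hw ?_ fun v hv => hdisc v (by linarith), hmesh⟩
  exact fun u v h => (dist_lt_of_gridCell_eq h).trans_le hsubmesh

theorem card_gridCell_eq_le (C : Finset ℂ) {δ : ℝ} {K : ℕ} (hK : 24 ≤ K * δ) (σ q : ℤ × ℤ) (n : ℤ) :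
    #{w ∈ C | gridCell σ n w = q ∧ δ * 3 ^ n ≤ 12 * isolationRadius C w} ≤ K ^ 2 := by
  have hK0 : 0 < K := Nat.pos_of_ne_zero fun h => by norm_num [h] at hK
  refine card_le_sq_of_gridCell_eq hK0 (fun w hw => (mem_filter.1 hw).2.1) fun v hv w hw hvw => ?_
  obtain ⟨hv, -⟩ := mem_filter.1 hv
  obtain ⟨-, -, hmesh⟩ := mem_filter.1 hw
  have hdist : δ * 3 ^ n ≤ 12 * dist v w := by linarith [isolationRadius_le_dist hv hvw]
  have hscaled : 24 * 3 ^ n ≤ K * (12 * dist v w) :=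
    calc (24 : ℝ) * 3 ^ n ≤ K * δ * 3 ^ n := by gcongr
      _ = K * (δ * 3 ^ n) := mul_assoc _ _ _
      _ ≤ K * (12 * dist v w) := by gcongr
  linarith

theorem mul_card_isSupported_le {C : Finset ℂ} {δ : ℝ} {K L : ℕ} (s : ℕ) (hδ : 0 < δ)
    (hC : 2 ≤ #C) (hK : 24 ≤ K * δ) (hL : 24 * δ⁻¹ ^ 2 ≤ 3 ^ L) :
    s * #{w ∈ C | IsSupported C δ s w} ≤ 8 * K ^ 2 * L * #C := by
  set S := {w ∈ C | IsSupported C δ s w}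
  have hcell : ∀ w ∈ S, ∃ σ ∈ gridShifts, ∃ n : ℤ,
      gridCell σ n w ∈ splitCells C s (gridCell σ (n - L)) (gridCell σ n) ∧
        δ * 3 ^ n ≤ 12 * isolationRadius C w := fun w hw =>
    (mem_filter.1 hw).2.exists_gridCell_mem_splitCells hδ hC (mem_filter.1 hw).1 hL
  choose! σ hσ n hsplit hmesh using hcell
  let cells := (gridShifts ×ˢ S.image n).sigma fun i =>
    splitCells C s (gridCell i.1 (i.2 - L)) (gridCell i.1 i.2)
  let cellOf (w : ℂ) : Σ _ : (ℤ × ℤ) × ℤ, ℤ × ℤ := ⟨(σ w, n w), gridCell (σ w) (n w) w⟩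
  have hmaps : ∀ w ∈ S, cellOf w ∈ cells := fun w hw =>
    mem_sigma.2 ⟨mk_mem_product (hσ w hw) (mem_image_of_mem n hw), hsplit w hw⟩
  have hfiber : ∀ c ∈ cells, #{w ∈ S | cellOf w = c} ≤ K ^ 2 := by
    rintro ⟨⟨τ, k⟩, q⟩ -
    refine (card_le_card fun w hw => ?_).trans (card_gridCell_eq_le C hK τ q k)
    obtain ⟨hwS, hwc⟩ := mem_filter.1 hw
    cases hwc
    exact mem_filter.2 ⟨(mem_filter.1 hwS).1, rfl, hmesh w hwS⟩
  have hcells : s * #cells ≤ 4 * (L * (2 * #C)) := by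
    rw [card_sigma, sum_product, mul_sum]
    exact sum_le_card_nsmul gridShifts _ _ fun τ _ =>
      mul_sum_card_splitCells_le C s L (gridCell_add_one_factorsThrough τ) _
  calc s * #S ≤ s * (K ^ 2 * #cells) := by
        gcongr
        exact card_le_mul_card_image_of_maps_to hmaps _ hfiber
    _ = K ^ 2 * (s * #cells) := by ring
    _ ≤ K ^ 2 * (4 * (L * (2 * #C))) := by gcongr
    _ = 8 * K ^ 2 * L * #C := by ring

theorem exists_three_pow_ge {x : ℝ} (hx : 2 < x) :
    ∃ L : ℕ, 24 * x ^ 2 ≤ 3 ^ L ∧ L ≤ 9 * Real.log x := by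
  have hlog : 1 / 2 < Real.log x := by
    linarith [Real.log_two_gt_d9, Real.log_lt_log two_pos hx]
  have hceil := Nat.ceil_lt_add_one (a := 7 * Real.log x) (by linarith)
  refine ⟨⌈7 * Real.log x⌉₊, ?_, by linarith⟩
  calc 24 * x ^ 2 ≤ 2 ^ 5 * x ^ 2 := by gcongr; norm_num
    _ ≤ x ^ 5 * x ^ 2 := by gcongr
    _ = Real.exp (7 * Real.log x) := by
        rw [← pow_add, mul_comm, Real.exp_mul, Real.exp_log (by linarith)]
        norm_cast
    _ ≤ Real.exp ⌈7 * Real.log x⌉₊ := by gcongr; exact Nat.le_ceil _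
    _ = Real.exp 1 ^ ⌈7 * Real.log x⌉₊ := (Real.exp_one_pow _).symm
    _ ≤ 3 ^ ⌈7 * Real.log x⌉₊ := by gcongr; linarith [Real.exp_one_lt_d9]

/-- **The Magic Lemma** (Benjamini–Schramm): at most
`A |C| δ⁻² log (δ⁻¹) / s` points of `C` are `(δ,s)`-supported. -/
theorem magic_lemma :
    ∃ A : ℝ, 0 < A ∧
      ∀ (δ : ℝ), 0 < δ → δ < 1 / 2 →
      ∀ (C : Finset ℂ), 2 ≤ C.card →
      ∀ s : ℕ, 2 ≤ s →
        ((C.filter (fun w => IsSupported C δ s w)).card : ℝ) ≤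
          A * C.card * δ⁻¹ ^ 2 * Real.log δ⁻¹ / s := by
  refine ⟨45000, by norm_num, fun δ hδ hδ' C hC s hs => ?_⟩
  have hinv : 2 < δ⁻¹ := (lt_inv_comm₀ two_pos hδ).2 (by rwa [← one_div])
  obtain ⟨K, hK, hK'⟩ : ∃ K : ℕ, 24 * δ⁻¹ ≤ K ∧ K ≤ 25 * δ⁻¹ :=
    ⟨⌈24 * δ⁻¹⌉₊, Nat.le_ceil _, by
      linarith [Nat.ceil_lt_add_one (a := 24 * δ⁻¹) (by positivity)]⟩
  obtain ⟨L, hL, hL'⟩ := exists_three_pow_ge hinv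
  have hcount := mul_card_isSupported_le s hδ hC ((mul_inv_le_iff₀ hδ).1 hK) hL
  rw [le_div_iff₀ (by positivity), mul_comm]
  calc (s * #{w ∈ C | IsSupported C δ s w} : ℝ) ≤ 8 * K ^ 2 * L * #C := mod_cast hcount
    _ ≤ 8 * (25 * δ⁻¹) ^ 2 * (9 * Real.log δ⁻¹) * #C := by gcongr
    _ = 45000 * #C * δ⁻¹ ^ 2 * Real.log δ⁻¹ := by ring
end

section
/- Cutset lower bound for flows: Let G=(V,E) be a finite connected simple graph, let a ≠ z be vertices, let θ be a flow from a to z, and let Γ ⊆ E be a cutset separating a from z (every path in G from a to z uses an edge of Γ). Then Σ_{e={x,y} ∈ Γ} |θ(x,y)| ≥ ‖θ‖, the strength of θ. -/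
/-!
Cutset lower bound for flows.

`G` is a finite connected simple graph with vertices `a ≠ z`.  A flow from `a`
to `z` is an antisymmetric function `θ : V → V → ℝ` vanishing on non-adjacent
pairs and satisfying the node law away from `a, z`; since it vanishes off
edges, its strength `∑_{y∼a} θ(a,y)` equals `∑ y, θ a y`.  For an undirected
edge `e = {x,y}` the value `|θ(x,y)| = |θ(y,x)|` is well defined; it is
implemented as `max |θ x y| |θ y x|`, which equals `|θ x y|` for antisymmetric
`θ`.  A cutset `Γ` separating `a` from `z` is a set of edges met by every path
from `a` to `z`.
-/

open Finset

variable {V : Type} [Fintype V] [DecidableEq V]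

/-- `θ` is a flow from `a` to `z` in `G`. -/
def IsFlow (G : SimpleGraph V) (a z : V) (θ : V → V → ℝ) : Prop :=
  (∀ x y, θ x y = -θ y x) ∧
  (∀ x y, ¬G.Adj x y → θ x y = 0) ∧
  (∀ x, x ≠ a → x ≠ z → ∑ y, θ x y = 0)

/-- The absolute value of a flow on an undirected edge. -/
noncomputable def edgeAbs (θ : V → V → ℝ) : Sym2 V → ℝ :=
  Sym2.lift ⟨fun x y => max |θ x y| |θ y x|, fun x y => max_comm _ _⟩

/-!
Let `S` be the set of vertices reachable from `a` once the edges of `Γ` are removed, so `a ∈ S` and,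
`Γ` being a cutset, `z ∉ S`. Summing the node law over `S`, the flow inside `S` cancels by
antisymmetry, so the strength is the net flow from `S` to its complement. Only edges of `Γ` lead out
of `S`, and each is crossed in one direction only.
-/

section Sums

variable {W R : Type*}

theorem sum_sum_eq_zero_of_antisymm [AddCommGroup R] [IsAddTorsionFree R] {θ : W → W → R}
    (hanti : ∀ x y, θ x y = -θ y x) (S : Finset W) : ∑ x ∈ S, ∑ y ∈ S, θ x y = 0 := by
  refine self_eq_neg.mp ?_
  calc ∑ x ∈ S, ∑ y ∈ S, θ x y = ∑ x ∈ S, ∑ y ∈ S, -θ y x :=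
        sum_congr rfl fun x _ => sum_congr rfl fun y _ => hanti x y
    _ = -∑ x ∈ S, ∑ y ∈ S, θ y x := by simp only [sum_neg_distrib]
    _ = -∑ x ∈ S, ∑ y ∈ S, θ x y := by rw [sum_comm]

theorem sum_sum_eq_sum_product_compl_of_antisymm [Fintype W] [DecidableEq W] [AddCommGroup R]
    [IsAddTorsionFree R] {θ : W → W → R} (hanti : ∀ x y, θ x y = -θ y x) (S : Finset W) :
    ∑ x ∈ S, ∑ y, θ x y = ∑ q ∈ S ×ˢ Sᶜ, θ q.1 q.2 := by
  calc ∑ x ∈ S, ∑ y, θ x y = ∑ x ∈ S, ∑ y ∈ S, θ x y + ∑ x ∈ S, ∑ y ∈ Sᶜ, θ x y := by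
        simp only [← sum_add_distrib, sum_add_sum_compl]
    _ = ∑ q ∈ S ×ˢ Sᶜ, θ q.1 q.2 := by
        rw [sum_sum_eq_zero_of_antisymm hanti, zero_add, sum_product]

theorem strength_eq_sum_product_compl [Fintype W] [DecidableEq W] [AddCommGroup R]
    [IsAddTorsionFree R] {θ : W → W → R} {a z : W} (hanti : ∀ x y, θ x y = -θ y x)
    (hnode : ∀ x, x ≠ a → x ≠ z → ∑ y, θ x y = 0) {S : Finset W} (ha : a ∈ S) (hz : z ∉ S) :
    ∑ y, θ a y = ∑ q ∈ S ×ˢ Sᶜ, θ q.1 q.2 := by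
  rw [← sum_sum_eq_sum_product_compl_of_antisymm hanti]
  exact (sum_eq_single_of_mem a ha fun x hx hxa =>
    hnode x hxa (ne_of_mem_of_not_mem hx hz)).symm

theorem injOn_sym2Mk_prod_of_disjoint {s t : Set W} (hst : Disjoint s t) :
    Set.InjOn (fun q : W × W => s(q.1, q.2)) (s ×ˢ t) := by
  rintro ⟨x, y⟩ ⟨hx, -⟩ ⟨x', y'⟩ ⟨-, hy'⟩ h
  obtain ⟨rfl, rfl⟩ | ⟨rfl, rfl⟩ := Sym2.eq_iff.mp h
  · rfl
  · exact (hst.ne_of_mem hx hy' rfl).elim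

theorem sum_product_le_sum_sym2_of_disjoint [AddCommMonoid R] [PartialOrder R]
    [IsOrderedAddMonoid R] {S T : Finset W} (hST : Disjoint S T) {Γ : Finset (Sym2 W)}
    {θ : W → W → R} {c : Sym2 W → R} (hc : ∀ e ∈ Γ, 0 ≤ c e)
    (hΓ : ∀ x ∈ S, ∀ y ∈ T, s(x, y) ∈ Γ → θ x y ≤ c s(x, y))
    (hΓc : ∀ x ∈ S, ∀ y ∈ T, s(x, y) ∉ Γ → θ x y ≤ 0) :
    ∑ q ∈ S ×ˢ T, θ q.1 q.2 ≤ ∑ e ∈ Γ, c e := by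
  classical
  have hinj : Set.InjOn (fun q : W × W => s(q.1, q.2)) (S ×ˢ T) :=
    injOn_sym2Mk_prod_of_disjoint (disjoint_coe.mpr hST)
  calc ∑ q ∈ S ×ˢ T, θ q.1 q.2
      ≤ ∑ q ∈ S ×ˢ T, if s(q.1, q.2) ∈ Γ then c s(q.1, q.2) else 0 := by
        refine sum_le_sum fun q hq => ?_
        obtain ⟨hx, hy⟩ := mem_product.mp hq
        split_ifs with h
        exacts [hΓ _ hx _ hy h, hΓc _ hx _ hy h]
    _ = ∑ e ∈ (S ×ˢ T).image (fun q => s(q.1, q.2)) with e ∈ Γ, c e := by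
        rw [sum_filter, sum_image (by simpa using hinj)]
    _ ≤ ∑ e ∈ Γ, c e :=
        sum_le_sum_of_subset_of_nonneg (fun _ he => (mem_filter.mp he).2) fun e he _ => hc e he

end Sums

section Cutset

variable {W : Type*} {G : SimpleGraph W} {Γ : Set (Sym2 W)} {a z : W}

theorem not_reachable_deleteEdges_of_cutset
    (hcut : ∀ p : G.Walk a z, p.IsPath → ∃ e ∈ Γ, e ∈ p.edges) :
    ¬(G.deleteEdges Γ).Reachable a z := by
  intro haz
  obtain ⟨p, hp⟩ := haz.exists_isPath
  obtain ⟨e, heΓ, hep⟩ := hcut _ (hp.mapLe (G.deleteEdges_le Γ))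
  have he : e ∈ (G.deleteEdges Γ).edgeSet := p.edges_subset_edgeSet (by simpa using hep)
  rw [SimpleGraph.edgeSet_deleteEdges] at he
  exact he.2 heΓ

theorem not_adj_of_reachable_deleteEdges {x y : W} (hx : (G.deleteEdges Γ).Reachable a x)
    (hy : ¬(G.deleteEdges Γ).Reachable a y) (hxy : s(x, y) ∉ Γ) : ¬G.Adj x y := fun hadj =>
  hy (hx.trans (SimpleGraph.deleteEdges_adj.mpr ⟨hadj, hxy⟩).reachable)

end Cutset

theorem abs_le_edgeAbs {W : Type} (θ : W → W → ℝ) (x y : W) : |θ x y| ≤ edgeAbs θ s(x, y) :=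
  le_max_left _ _

/-- Weak duality between flows and cuts, with `c` as the edge capacities. -/
theorem cutset_lower_bound_general {W R : Type*} [Fintype W] [AddCommGroup R] [LinearOrder R]
    [IsOrderedAddMonoid R] {G : SimpleGraph W} {a z : W} {θ : W → W → R}
    (hanti : ∀ x y, θ x y = -θ y x) (hsupp : ∀ x y, ¬G.Adj x y → θ x y = 0)
    (hnode : ∀ x, x ≠ a → x ≠ z → ∑ y, θ x y = 0) {Γ : Finset (Sym2 W)}
    (hcut : ∀ p : G.Walk a z, p.IsPath → ∃ e ∈ Γ, e ∈ p.edges) {c : Sym2 W → R}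
    (hc : ∀ x y, s(x, y) ∈ Γ → |θ x y| ≤ c s(x, y)) :
    ∑ y, θ a y ≤ ∑ e ∈ Γ, c e := by
  classical
  let S : Finset W := {v | (G.deleteEdges Γ).Reachable a v}
  have hS {v : W} : v ∈ S ↔ (G.deleteEdges Γ).Reachable a v := mem_filter_univ v
  have haS : a ∈ S := hS.mpr .rfl
  have hzS : z ∉ S := hS.not.mpr (not_reachable_deleteEdges_of_cutset hcut)
  have hc_nonneg : ∀ e ∈ Γ, 0 ≤ c e := Sym2.ind fun x y he => (abs_nonneg _).trans (hc x y he)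
  rw [strength_eq_sum_product_compl hanti hnode haS hzS]
  refine sum_product_le_sum_sym2_of_disjoint disjoint_compl_right hc_nonneg
    (fun x _ y _ hxy => (le_abs_self _).trans (hc x y hxy)) fun x hx y hy hxy => ?_
  exact (hsupp x y <| not_adj_of_reachable_deleteEdges (hS.mp hx)
    (hS.not.mp (mem_compl.mp hy)) hxy).le

/-- **Cutset lower bound**: the total absolute flow through any cutset
separating `a` from `z` is at least the strength of the flow. -/
theorem cutset_lower_bound (G : SimpleGraph V) (hG : G.Connected)
    (a z : V) (haz : a ≠ z)
    (θ : V → V → ℝ) (hθ : IsFlow G a z θ)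
    (Γ : Finset (Sym2 V)) (hΓ : (Γ : Set (Sym2 V)) ⊆ G.edgeSet)
    (hcut : ∀ p : G.Walk a z, p.IsPath → ∃ e ∈ Γ, e ∈ p.edges) :
    ∑ y, θ a y ≤ ∑ e ∈ Γ, edgeAbs θ e :=
  cutset_lower_bound_general hθ.1 hθ.2.1 hθ.2.2 hcut fun x y _ => abs_le_edgeAbs θ x y
end

section
/- Recurrence of ℤ² in flow form: Every unit flow from the origin to infinity on the lattice ℤ² has infinite energy. Precisely, if θ : ℤ² × ℤ² → ℝ is antisymmetric (θ(x,y) = −θ(y,x)), vanishes on non-adjacent pairs, satisfies the node law Σ_{y∼x} θ(x,y) = 0 at every vertex x ≠ (0,0), and has strength Σ_{y∼(0,0)} θ((0,0),y) = 1, then the sum Σ over unordered adjacent pairs {x,y} of θ(x,y)² diverges (is not finite). -/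
/-!
Recurrence of `ℤ²` in flow form: every unit flow from the origin to infinity
has infinite energy.

Vertices are points of `ℤ × ℤ`; two vertices are adjacent when
`|x₁−y₁| + |x₂−y₂| = 1`.  Since each vertex has exactly the four neighbours
`x ± (1,0)`, `x ± (0,1)`, the node law `∑_{y∼x} θ(x,y) = 0` is written as the
sum of the four corresponding values.  Each undirected edge appears exactly
once in the family indexed by `(x, b) : (ℤ × ℤ) × Bool`, namely as the edge
from `x` to `x + (1,0)` (for `b = true`) or to `x + (0,1)` (for `b = false`);
the energy of `θ` is the sum of `θ(e)²` over this family, and "the energy is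
infinite" is expressed as the non-summability of this (nonnegative) family.
-/

/-- Adjacency in the lattice `ℤ²`. -/
def ZtwoAdj (x y : ℤ × ℤ) : Prop := |x.1 - y.1| + |x.2 - y.2| = 1

/-!
The argument is that of Nash-Williams. The net outflow of the vertices in the box `(-n, n]²` has to
cross the `8n` edges of its boundary, and it tends to the strength of the flow, so by Cauchy–Schwarz
these edges carry energy of order at least `1 / n`. The boundaries of different boxes are disjoint,
and the harmonic series diverges.
-/

open Filter Finset

section CutSets

variable {ι κ : Type*} {S : κ → Finset ι}

lemma summable_sum_of_pairwise_disjoint {α : Type*} [AddCommGroup α] [UniformSpace α]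
    [IsUniformAddGroup α] [CompleteSpace α] {f : ι → α} (hf : Summable f)
    (hS : Pairwise (Function.onFun Disjoint S)) :
    Summable fun k ↦ ∑ i ∈ S k, f i := by
  have hinj : Function.Injective fun p : Σ k, S k ↦ (p.2 : ι) := by
    rintro ⟨k, i, hi⟩ ⟨l, j, hj⟩ (rfl : i = j)
    obtain rfl : k = l := by
      by_contra hkl
      exact disjoint_left.mp (hS hkl) hi hj
    rfl
  simpa only [Function.comp_def, Finset.tsum_subtype] using (hf.comp_injective hinj).sigma

/-- The Nash-Williams criterion, with `f` the absolute value of a flow and `S k` disjoint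
cutsets. -/
theorem not_summable_sq_of_le_sum_of_pairwise_disjoint {f : ι → ℝ} {c : ℝ} (hc : 0 < c)
    (hS : Pairwise (Function.onFun Disjoint S)) (hf : ∀ᶠ k in cofinite, c ≤ ∑ i ∈ S k, f i)
    (hcard : ¬Summable fun k ↦ 1 / (#(S k) : ℝ)) :
    ¬Summable fun i ↦ f i ^ 2 := by
  intro hsum
  have hblocks : Summable fun k ↦ ∑ i ∈ S k, f i ^ 2 := summable_sum_of_pairwise_disjoint hsum hS
  have hbound : ∀ᶠ k in cofinite, ‖c ^ 2 / (#(S k) : ℝ)‖ ≤ ∑ i ∈ S k, f i ^ 2 := by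
    filter_upwards [hf] with k hk
    rw [Real.norm_of_nonneg (by positivity)]
    refine div_le_of_le_mul₀ (by positivity) (by positivity) ?_
    calc c ^ 2 ≤ (∑ i ∈ S k, f i) ^ 2 := by gcongr
      _ ≤ #(S k) * ∑ i ∈ S k, f i ^ 2 := sq_sum_le_card_mul_sum_sq
      _ = (∑ i ∈ S k, f i ^ 2) * #(S k) := mul_comm _ _
  have hdiv : Summable fun k ↦ c ^ 2 * (1 / (#(S k) : ℝ)) := by
    simpa only [mul_one_div] using hblocks.of_norm_bounded_eventually hbound
  exact hcard ((summable_mul_left_iff (pow_ne_zero 2 hc.ne')).mp hdiv)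

end CutSets

lemma sum_Ioc_int_sub {G : Type*} [AddCommGroup G] (f : ℤ → G) {m n : ℤ} (hmn : m ≤ n) :
    ∑ i ∈ Ioc m n, (f i - f (i - 1)) = f n - f m := by
  induction n, hmn using Int.leInduction with
  | base => simp
  | succ n hmn ih =>
    rw [← insert_Ioc_right_eq_Ioc_add_one hmn, sum_insert (by simp), ih, add_sub_cancel_right,
      sub_add_sub_cancel]

/-- The sum of the values of `θ` on the four edges leaving `x`, i.e. the divergence of `θ` at `x`;
the node law at `x` is `netOutflow θ x = 0`. -/
def netOutflow {G : Type*} [AddCommGroup G] (θ : ℤ × ℤ → ℤ × ℤ → G) (x : ℤ × ℤ) : G :=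
  θ x (x.1 + 1, x.2) + θ x (x.1 - 1, x.2) + θ x (x.1, x.2 + 1) + θ x (x.1, x.2 - 1)

/-- The value of `θ` on the undirected edge encoded by `e`, oriented to the right from `e.1` if
`e.2 = true` and upwards from `e.1` if `e.2 = false`. -/
def edgeFlow {G : Type*} (θ : ℤ × ℤ → ℤ × ℤ → G) (e : (ℤ × ℤ) × Bool) : G :=
  θ e.1 (if e.2 then (e.1.1 + 1, e.1.2) else (e.1.1, e.1.2 + 1))

/-- The box `(-n, n]²` in `ℤ²`; half-open intervals make its edge boundary lie on the four lines
with coordinate `±n`. -/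
noncomputable def latticeBox (n : ℕ) : Finset (ℤ × ℤ) :=
  Ioc (-n : ℤ) n ×ˢ Ioc (-n : ℤ) n

/-- The edge boundary of `latticeBox n`, in the encoding of edges used by `edgeFlow`. -/
noncomputable def boxCut (n : ℕ) : Finset ((ℤ × ℤ) × Bool) :=
  ((({↑n, -↑n} : Finset ℤ) ×ˢ Ioc (-n : ℤ) n) ×ˢ {true}) ∪
    ((Ioc (-n : ℤ) n ×ˢ ({↑n, -↑n} : Finset ℤ)) ×ˢ {false})

lemma tendsto_latticeBox_atTop : Tendsto latticeBox atTop atTop := by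
  refine tendsto_atTop_finset_of_monotone (fun m n hmn ↦ ?_) fun x ↦ ?_
  · have hmn' : (m : ℤ) ≤ n := mod_cast hmn
    exact product_subset_product (Ioc_subset_Ioc (neg_le_neg hmn') hmn')
      (Ioc_subset_Ioc (neg_le_neg hmn') hmn')
  · refine ⟨x.1.natAbs + x.2.natAbs + 1, ?_⟩
    simp only [latticeBox, mem_product, mem_Ioc]
    omega

lemma pairwise_disjoint_boxCut : Pairwise (Function.onFun Disjoint boxCut) := by
  intro m n hmn
  refine disjoint_left.mpr ?_
  rintro ⟨⟨a, b⟩, _ | _⟩ hm hn <;>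
  · simp only [boxCut, mem_union, mem_product, mem_insert, mem_singleton, mem_Ioc] at hm hn
    omega

lemma sum_boxCut {M : Type*} [AddCommMonoid M] (f : (ℤ × ℤ) × Bool → M) {n : ℕ} (hn : n ≠ 0) :
    ∑ e ∈ boxCut n, f e =
      ∑ j ∈ Ioc (-n : ℤ) n, (f ((n, j), true) + f (((-n : ℤ), j), true)) +
        ∑ i ∈ Ioc (-n : ℤ) n, (f ((i, n), false) + f ((i, (-n : ℤ)), false)) := by
  have hdisj : Disjoint ((({↑n, -↑n} : Finset ℤ) ×ˢ Ioc (-n : ℤ) n) ×ˢ {true})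
      ((Ioc (-n : ℤ) n ×ˢ ({↑n, -↑n} : Finset ℤ)) ×ˢ {false}) :=
    disjoint_product.mpr (.inr (by simp))
  have hne : (n : ℤ) ≠ (-n : ℤ) := by omega
  simp only [boxCut, sum_union hdisj, sum_product, sum_singleton, sum_pair hne, sum_add_distrib]

lemma card_boxCut (n : ℕ) : #(boxCut n) = 8 * n := by
  rcases eq_or_ne n 0 with rfl | hn
  · simp [boxCut]
  · rw [card_eq_sum_ones, sum_boxCut _ hn]
    simp only [sum_const, Int.card_Ioc, smul_eq_mul]
    omega

lemma not_summable_one_div_card_boxCut : ¬Summable fun n ↦ 1 / (#(boxCut n) : ℝ) := by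
  intro h
  refine Real.not_summable_one_div_natCast ((h.mul_left 8).congr fun n ↦ ?_)
  rw [card_boxCut]
  push_cast
  field_simp

lemma netOutflow_eq_edgeFlow_sub {G : Type*} [AddCommGroup G] {θ : ℤ × ℤ → ℤ × ℤ → G}
    (hanti : ∀ x y, θ x y = -θ y x) (i j : ℤ) :
    netOutflow θ (i, j) =
      edgeFlow θ ((i, j), true) - edgeFlow θ ((i - 1, j), true) +
        (edgeFlow θ ((i, j), false) - edgeFlow θ ((i, j - 1), false)) := by
  simp only [netOutflow, edgeFlow, if_true, Bool.false_eq_true, if_false, sub_add_cancel,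
    hanti (i - 1, j) (i, j), hanti (i, j - 1) (i, j)]
  abel

lemma sum_netOutflow_Ioc_product {G : Type*} [AddCommGroup G] {θ : ℤ × ℤ → ℤ × ℤ → G}
    (hanti : ∀ x y, θ x y = -θ y x) {a b c d : ℤ} (hab : a ≤ b) (hcd : c ≤ d) :
    ∑ x ∈ Ioc a b ×ˢ Ioc c d, netOutflow θ x =
      ∑ j ∈ Ioc c d, (edgeFlow θ ((b, j), true) - edgeFlow θ ((a, j), true)) +
        ∑ i ∈ Ioc a b, (edgeFlow θ ((i, d), false) - edgeFlow θ ((i, c), false)) := by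
  simp only [sum_product, netOutflow_eq_edgeFlow_sub hanti, sum_add_distrib]
  congr 1
  · rw [sum_comm]
    exact sum_congr rfl fun j _ ↦ sum_Ioc_int_sub (fun i ↦ edgeFlow θ ((i, j), true)) hab
  · exact sum_congr rfl fun i _ ↦ sum_Ioc_int_sub (fun j ↦ edgeFlow θ ((i, j), false)) hcd

lemma norm_sum_netOutflow_latticeBox_le {E : Type*} [SeminormedAddCommGroup E]
    {θ : ℤ × ℤ → ℤ × ℤ → E} (hanti : ∀ x y, θ x y = -θ y x) {n : ℕ} (hn : n ≠ 0) :
    ‖∑ x ∈ latticeBox n, netOutflow θ x‖ ≤ ∑ e ∈ boxCut n, ‖edgeFlow θ e‖ := by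
  have hle : (-n : ℤ) ≤ n := by omega
  rw [latticeBox, sum_netOutflow_Ioc_product hanti hle hle, sum_boxCut _ hn]
  refine (norm_add_le _ _).trans (add_le_add ?_ ?_) <;>
    exact (norm_sum_le _ _).trans (sum_le_sum fun _ _ ↦ norm_sub_le _ _)

theorem z2_unit_flow_infinite_energy_general {E : Type*} [NormedAddCommGroup E]
    {θ : ℤ × ℤ → ℤ × ℤ → E} (hanti : ∀ x y, θ x y = -θ y x) {s : E}
    (hsource : HasSum (netOutflow θ) s) (hs : s ≠ 0) :
    ¬Summable fun e ↦ ‖edgeFlow θ e‖ ^ 2 := by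
  have hs' : 0 < ‖s‖ := norm_pos_iff.mpr hs
  have hflux : Tendsto (fun n ↦ ‖∑ x ∈ latticeBox n, netOutflow θ x‖) atTop (nhds ‖s‖) :=
    (hsource.comp tendsto_latticeBox_atTop).norm
  refine not_summable_sq_of_le_sum_of_pairwise_disjoint (half_pos hs') pairwise_disjoint_boxCut ?_
    not_summable_one_div_card_boxCut
  rw [Nat.cofinite_eq_atTop]
  filter_upwards [hflux.eventually_const_le (half_lt_self hs'), eventually_ne_atTop 0] with n hn hn0
  exact hn.trans (norm_sum_netOutflow_latticeBox_le hanti hn0)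

/-- **Recurrence of `ℤ²`**: every unit flow from the origin to infinity on
`ℤ²` has infinite energy. -/
theorem z2_unit_flow_infinite_energy (θ : ℤ × ℤ → ℤ × ℤ → ℝ)
    (hanti : ∀ x y, θ x y = -θ y x)
    (hsupp : ∀ x y, ¬ZtwoAdj x y → θ x y = 0)
    (hnode : ∀ x : ℤ × ℤ, x ≠ (0, 0) →
      θ x (x.1 + 1, x.2) + θ x (x.1 - 1, x.2) +
        θ x (x.1, x.2 + 1) + θ x (x.1, x.2 - 1) = 0)
    (hstrength :
      θ (0, 0) (1, 0) + θ (0, 0) (-1, 0) +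
        θ (0, 0) (0, 1) + θ (0, 0) (0, -1) = 1) :
    ¬Summable (fun p : (ℤ × ℤ) × Bool =>
      θ p.1 (if p.2 then (p.1.1 + 1, p.1.2) else (p.1.1, p.1.2 + 1)) ^ 2) := by
  have hsource : HasSum (netOutflow θ) 1 := by
    simpa [netOutflow, hstrength] using hasSum_single (f := netOutflow θ) (0, 0) hnode
  simpa only [edgeFlow, Real.norm_eq_abs, sq_abs] using
    z2_unit_flow_infinite_energy_general hanti hsource one_ne_zero
end

section
/- Counting supported squares in nested grids: Let k ≥ 3 be an integer, and for each n ∈ ℤ let G_n be the tiling of ℝ² by the half-open squares [k^n·i, k^n·(i+1)) × [k^n·j, k^n·(j+1)) for i,j ∈ ℤ (so each square of G_n is the disjoint union of k² squares of G_{n−1}). Let C ⊆ ℝ² be a finite set and s ≥ 2 an integer. Call a square S ∈ G_n s-supported if for every square S' ∈ G_{n−1} with S' ⊆ S one has |C ∩ (S ∖ S')| ≥ s. Then the total number of s-supported squares, summed over all n ∈ ℤ and all S ∈ G_n, is at most 2|C|/s (in particular it is finite). -/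
/-!
Counting supported squares in nested grids.

For an integer `k ≥ 3` and `n i j : ℤ`, `gridSquare k n i j` is the half-open
square `[kⁿ i, kⁿ (i+1)) × [kⁿ j, kⁿ (j+1)) ⊆ ℝ²`; the squares of level `n`
tile the plane and each is the disjoint union of `k²` squares of level `n−1`.
For a finite set `C ⊆ ℝ²` and an integer `s ≥ 2`, a level-`n` square `S` is
`s`-supported if `|C ∩ (S ∖ S')| ≥ s` for every level-`(n−1)` square
`S' ⊆ S`.  The claim: the total number of `s`-supported squares over all
levels `n ∈ ℤ` is finite and at most `2|C|/s`.
-/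

/-- The half-open grid square of level `n` at position `(i,j)`. -/
def gridSquare (k : ℤ) (n i j : ℤ) : Set (ℝ × ℝ) :=
  Set.Ico ((k : ℝ) ^ n * i) ((k : ℝ) ^ n * (i + 1)) ×ˢ
    Set.Ico ((k : ℝ) ^ n * j) ((k : ℝ) ^ n * (j + 1))

/-- The level-`n` square at `(i,j)` is `s`-supported for the point set `C`. -/
def IsSupportedSquare (k : ℤ) (C : Set (ℝ × ℝ)) (s : ℕ) (n i j : ℤ) : Prop :=
  ∀ i' j' : ℤ, gridSquare k (n - 1) i' j' ⊆ gridSquare k n i j →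
    s ≤ Nat.card ↥(C ∩ (gridSquare k n i j \ gridSquare k (n - 1) i' j'))

/-!
The traces on `C` of the supported squares form a laminar family: two of them are either disjoint,
or one contains the other and at least `s` further points, because the smaller square lies in a
single child of the larger one. Members of such a family with at most one maximal proper submember
have `s` points of their own, and in a forest there are fewer branching nodes than leaves.
Both counts are done at once, by adding the members in order of increasing size and keeping a
disjoint subfamily `J` (the current roots) with `s * (#members + #J) ≤ 2 * ∑ j ∈ J, #(T j)`.
-/

open Finset

section SeparatedLaminar

variable {ι α : Type*} [DecidableEq α] {s : ℕ}

/-- A laminar family of finite sets, indexed by `I`, in which every member has at least `s` elements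
and the difference of any two nested members has at least `s` elements. Members are counted with
their indices; for `0 < s` distinct indices automatically carry distinct sets. -/
structure IsSeparatedLaminar (s : ℕ) (I : Set ι) (T : ι → Finset α) : Prop where
  le_card : ∀ i ∈ I, s ≤ #(T i)
  pairwise : I.Pairwise fun i j =>
    Disjoint (T i) (T j) ∨ (T i ⊆ T j ∧ s ≤ #(T j \ T i)) ∨ (T j ⊆ T i ∧ s ≤ #(T i \ T j))

theorem IsSeparatedLaminar.mono {I J : Set ι} {T : ι → Finset α} (h : IsSeparatedLaminar s I T)
    (hJI : J ⊆ I) : IsSeparatedLaminar s J T :=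
  ⟨fun i hi => h.le_card i (hJI hi), h.pairwise.mono hJI⟩

theorem IsSeparatedLaminar.disjoint_or_subset_of_card_le {I : Set ι} {T : ι → Finset α}
    (h : IsSeparatedLaminar s I T) {i j : ι} (hi : i ∈ I) (hj : j ∈ I) (hij : i ≠ j)
    (hcard : #(T i) ≤ #(T j)) :
    Disjoint (T i) (T j) ∨ (T i ⊆ T j ∧ s ≤ #(T j \ T i)) := by
  rcases h.pairwise hi hj hij with hdisj | hsub | ⟨hsub, hgap⟩
  · exact .inl hdisj
  · exact .inr hsub
  · have heq : T j = T i := eq_of_subset_of_card_le hsub hcard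
    rw [heq] at hgap ⊢
    exact .inr ⟨subset_rfl, hgap⟩

theorem two_mul_add_two_mul_sum_card_le {A : Finset α} {J : Finset ι} {T : ι → Finset α}
    (hA : s ≤ #A) (hdisj : (J : Set ι).PairwiseDisjoint T)
    (hT : ∀ j ∈ J, T j ⊆ A ∧ s ≤ #(A \ T j)) :
    2 * s + 2 * ∑ j ∈ J, #(T j) ≤ s * #J + 2 * #A := by
  have hsum : ∑ j ∈ J, #(T j) ≤ #A := by
    rw [← card_biUnion hdisj]
    exact card_le_card (biUnion_subset.2 fun j hj => (hT j hj).1)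
  obtain hzero | hone | htwo : #J = 0 ∨ #J = 1 ∨ 2 ≤ #J := by omega
  · simp [card_eq_zero.1 hzero, hA]
  · obtain ⟨j, rfl⟩ := card_eq_one.1 hone
    obtain ⟨hsub, hgap⟩ := hT j (mem_singleton_self j)
    have hsplit := card_sdiff_add_card_eq_card hsub
    simp only [sum_singleton, card_singleton]
    omega
  · have hroots : s * 2 ≤ s * #J := Nat.mul_le_mul_left s htwo
    omega

theorem IsSeparatedLaminar.exists_pairwiseDisjoint {F : Finset ι} {T : ι → Finset α}
    (h : IsSeparatedLaminar s F T) :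
    ∃ J ⊆ F, (J : Set ι).PairwiseDisjoint T ∧ s * (#F + #J) ≤ 2 * ∑ j ∈ J, #(T j) := by
  classical
  induction F using Finset.induction_on_max_value (fun i => #(T i)) with
  | empty => exact ⟨∅, by simp⟩
  | insert a F ha hmax ih =>
    obtain ⟨J, hJF, hJ, hcount⟩ := ih (h.mono (by simp))
    have hcases : ∀ j ∈ J, Disjoint (T j) (T a) ∨ (T j ⊆ T a ∧ s ≤ #(T a \ T j)) := fun j hj =>
      h.disjoint_or_subset_of_card_le (by simp [hJF hj]) (by simp)
        (ne_of_mem_of_not_mem (hJF hj) ha) (hmax j (hJF hj))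
    let nested := {j ∈ J | ¬Disjoint (T j) (T a)}
    let separate := {j ∈ J | Disjoint (T j) (T a)}
    have hnested : 2 * s + 2 * ∑ j ∈ nested, #(T j) ≤ s * #nested + 2 * #(T a) :=
      two_mul_add_two_mul_sum_card_le (h.le_card a (by simp))
        (hJ.subset (coe_subset.2 (filter_subset _ J))) fun j hj =>
          (hcases j (mem_filter.1 hj).1).resolve_left (mem_filter.1 hj).2
    have hsum : ∑ j ∈ separate, #(T j) + ∑ j ∈ nested, #(T j) = ∑ j ∈ J, #(T j) :=
      sum_filter_add_sum_filter_not ..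
    have hcard : #separate + #nested = #J := card_filter_add_card_filter_not ..
    have ha_separate : a ∉ separate := fun hmem => ha (hJF (mem_filter.1 hmem).1)
    refine ⟨insert a separate, insert_subset_insert a ((filter_subset _ J).trans hJF), ?_, ?_⟩
    · rw [coe_insert, Set.pairwiseDisjoint_insert]
      exact ⟨hJ.subset (coe_subset.2 (filter_subset _ J)),
        fun j hj _ => (mem_filter.1 hj).2.symm⟩
    · rw [card_insert_of_notMem ha, card_insert_of_notMem ha_separate, sum_insert ha_separate]
      rw [← hcard, ← hsum] at hcount
      linarith

theorem IsSeparatedLaminar.mul_card_le {F : Finset ι} {T : ι → Finset α} {C : Finset α}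
    (h : IsSeparatedLaminar s F T) (hTC : ∀ i ∈ F, T i ⊆ C) : s * #F ≤ 2 * #C := by
  obtain ⟨J, hJF, hJ, hcount⟩ := h.exists_pairwiseDisjoint
  calc
    s * #F ≤ s * (#F + #J) := Nat.mul_le_mul_left s (Nat.le_add_right ..)
    _ ≤ 2 * ∑ j ∈ J, #(T j) := hcount
    _ = 2 * #(J.biUnion T) := by rw [card_biUnion hJ]
    _ ≤ 2 * #C := by grw [biUnion_subset.2 fun j hj => hTC j (hJF hj)]

theorem IsSeparatedLaminar.finite {I : Set ι} {T : ι → Finset α} {C : Finset α}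
    (h : IsSeparatedLaminar s I T) (hs : 0 < s) (hTC : ∀ i ∈ I, T i ⊆ C) : I.Finite := by
  by_contra hinf
  obtain ⟨F, hFI, hF⟩ := Set.Infinite.exists_subset_card_eq hinf (2 * #C + 1)
  have hle : s * #F ≤ 2 * #C := (h.mono hFI).mul_card_le fun i hi => hTC i (hFI hi)
  have hge : #F ≤ s * #F := Nat.le_mul_of_pos_left _ hs
  omega

theorem IsSeparatedLaminar.mul_ncard_le {I : Set ι} {T : ι → Finset α} {C : Finset α}
    (h : IsSeparatedLaminar s I T) (hs : 0 < s) (hTC : ∀ i ∈ I, T i ⊆ C) :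
    s * I.ncard ≤ 2 * #C := by
  lift I to Finset ι using h.finite hs hTC
  rw [Set.ncard_coe_finset]
  exact h.mul_card_le hTC

end SeparatedLaminar

section Floor

variable {K : Type*} [Field K] [LinearOrder K] [IsStrictOrderedRing K] [FloorRing K]

theorem floor_div_zpow_add_natCast {k : ℤ} (hk : 0 < k) (m : ℤ) (d : ℕ) (x : K) :
    ⌊x / (k : K) ^ (m + d)⌋ = ⌊x / (k : K) ^ m⌋ / k ^ d := by
  have hk0 : (k : K) ≠ 0 := mod_cast hk.ne'
  rw [zpow_add₀ hk0, zpow_natCast, ← div_div, ← Int.cast_pow,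
    Int.floor_div_cast_of_nonneg (by positivity)]

theorem floor_div_zpow_eq_of_le {k : ℤ} (hk : 0 < k) {m n : ℤ} (hmn : m ≤ n) {x y : K}
    (hxy : ⌊x / (k : K) ^ m⌋ = ⌊y / (k : K) ^ m⌋) :
    ⌊x / (k : K) ^ n⌋ = ⌊y / (k : K) ^ n⌋ := by
  obtain ⟨d, rfl⟩ := Int.le.dest hmn
  rw [floor_div_zpow_add_natCast hk, floor_div_zpow_add_natCast hk, hxy]

end Floor

theorem mem_gridSquare_iff {k : ℤ} (hk : 0 < k) {n i j : ℤ} {p : ℝ × ℝ} :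
    p ∈ gridSquare k n i j ↔ ⌊p.1 / (k : ℝ) ^ n⌋ = i ∧ ⌊p.2 / (k : ℝ) ^ n⌋ = j := by
  have hkn : (0 : ℝ) < (k : ℝ) ^ n := zpow_pos (mod_cast hk) n
  simp only [gridSquare, Set.mem_prod, Set.mem_Ico, Int.floor_eq_iff, le_div_iff₀ hkn,
    div_lt_iff₀ hkn, mul_comm]

theorem gridSquare_nonempty {k : ℤ} (hk : 0 < k) (n i j : ℤ) : (gridSquare k n i j).Nonempty := by
  have hkn : (k : ℝ) ^ n ≠ 0 := zpow_ne_zero n (mod_cast hk.ne')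
  exact ⟨(i * (k : ℝ) ^ n, j * (k : ℝ) ^ n), (mem_gridSquare_iff hk).2 (by simp [hkn])⟩

theorem gridSquare_subset_of_mem {k : ℤ} (hk : 0 < k) {m n i j i' j' : ℤ} (hmn : m ≤ n)
    {p : ℝ × ℝ} (hp : p ∈ gridSquare k m i j) (hp' : p ∈ gridSquare k n i' j') :
    gridSquare k m i j ⊆ gridSquare k n i' j' := by
  intro q hq
  rw [mem_gridSquare_iff hk] at hp hp' hq ⊢
  exact ⟨(floor_div_zpow_eq_of_le hk hmn (hq.1.trans hp.1.symm)).trans hp'.1,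
    (floor_div_zpow_eq_of_le hk hmn (hq.2.trans hp.2.symm)).trans hp'.2⟩

theorem exists_mem_gridSquare_subset {k : ℤ} (hk : 0 < k) {m n i j : ℤ} (hmn : m ≤ n)
    {p : ℝ × ℝ} (hp : p ∈ gridSquare k n i j) :
    ∃ i' j' : ℤ, p ∈ gridSquare k m i' j' ∧ gridSquare k m i' j' ⊆ gridSquare k n i j := by
  have hp' : p ∈ gridSquare k m ⌊p.1 / (k : ℝ) ^ m⌋ ⌊p.2 / (k : ℝ) ^ m⌋ :=
    (mem_gridSquare_iff hk).2 ⟨rfl, rfl⟩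
  exact ⟨_, _, hp', gridSquare_subset_of_mem hk hmn hp' hp⟩

open Classical in
/-- The points of `C` in the grid square with level `q.1` and position `q.2`. -/
noncomputable def gridTrace (k : ℤ) (C : Finset (ℝ × ℝ)) (q : ℤ × ℤ × ℤ) : Finset (ℝ × ℝ) :=
  {p ∈ C | p ∈ gridSquare k q.1 q.2.1 q.2.2}

theorem mem_gridTrace {k : ℤ} {C : Finset (ℝ × ℝ)} {q : ℤ × ℤ × ℤ} {p : ℝ × ℝ} :
    p ∈ gridTrace k C q ↔ p ∈ C ∧ p ∈ gridSquare k q.1 q.2.1 q.2.2 := by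
  simp only [gridTrace, mem_filter]

section Supported

variable {k : ℤ} {C : Finset (ℝ × ℝ)} {s : ℕ}

theorem IsSupportedSquare.le_card_of_forall_mem {n i j i' j' : ℤ} {A : Finset (ℝ × ℝ)}
    (h : IsSupportedSquare k C s n i j)
    (hsub : gridSquare k (n - 1) i' j' ⊆ gridSquare k n i j)
    (hA : ∀ p ∈ C, p ∈ gridSquare k n i j → p ∉ gridSquare k (n - 1) i' j' → p ∈ A) :
    s ≤ #A := by
  have hle := h i' j' hsub
  rw [Nat.card_coe_set_eq] at hle
  rw [← Set.ncard_coe_finset A]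
  exact hle.trans (Set.ncard_le_ncard fun p hp => hA p hp.1 hp.2.1 hp.2.2)

theorem IsSupportedSquare.le_card_gridTrace (hk : 0 < k) {q : ℤ × ℤ × ℤ}
    (h : IsSupportedSquare k C s q.1 q.2.1 q.2.2) : s ≤ #(gridTrace k C q) := by
  obtain ⟨p, hp⟩ := gridSquare_nonempty hk q.1 q.2.1 q.2.2
  obtain ⟨i', j', -, hchild⟩ := exists_mem_gridSquare_subset hk (sub_one_lt q.1).le hp
  exact h.le_card_of_forall_mem hchild fun p hpC hpq _ => mem_gridTrace.2 ⟨hpC, hpq⟩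

theorem IsSupportedSquare.le_card_gridTrace_sdiff (hk : 0 < k) {q r : ℤ × ℤ × ℤ}
    (h : IsSupportedSquare k C s r.1 r.2.1 r.2.2) (hlt : q.1 < r.1) {p : ℝ × ℝ}
    (hpq : p ∈ gridSquare k q.1 q.2.1 q.2.2) (hpr : p ∈ gridSquare k r.1 r.2.1 r.2.2) :
    s ≤ #(gridTrace k C r \ gridTrace k C q) := by
  obtain ⟨i', j', hp, hchild⟩ := exists_mem_gridSquare_subset hk (sub_one_lt r.1).le hpr
  have hsub := gridSquare_subset_of_mem hk (Int.le_sub_one_of_lt hlt) hpq hp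
  refine h.le_card_of_forall_mem hchild fun x hxC hxr hx => ?_
  simp only [mem_sdiff, mem_gridTrace, hxC, hxr, true_and]
  exact fun hxq => hx (hsub hxq)

theorem gridTrace_disjoint_or_nested (hk : 0 < k) {q r : ℤ × ℤ × ℤ}
    (h : IsSupportedSquare k C s r.1 r.2.1 r.2.2) (hqr : q ≠ r) (hle : q.1 ≤ r.1) :
    Disjoint (gridTrace k C q) (gridTrace k C r) ∨
      (gridTrace k C q ⊆ gridTrace k C r ∧ s ≤ #(gridTrace k C r \ gridTrace k C q)) := by
  rw [or_iff_not_imp_left, not_disjoint_iff]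
  rintro ⟨p, hpq, hpr⟩
  rw [mem_gridTrace] at hpq hpr
  have hlt : q.1 < r.1 := by
    refine hle.lt_of_ne fun heq => hqr ?_
    have hq := (mem_gridSquare_iff hk).1 hpq.2
    have hr := (mem_gridSquare_iff hk).1 hpr.2
    rw [heq] at hq
    exact Prod.ext heq (Prod.ext (hq.1.symm.trans hr.1) (hq.2.symm.trans hr.2))
  refine ⟨fun x hx => ?_, h.le_card_gridTrace_sdiff hk hlt hpq.2 hpr.2⟩
  rw [mem_gridTrace] at hx ⊢
  exact ⟨hx.1, gridSquare_subset_of_mem hk hle hpq.2 hpr.2 hx.2⟩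

theorem isSeparatedLaminar_gridTrace (hk : 0 < k) :
    IsSeparatedLaminar s {q : ℤ × ℤ × ℤ | IsSupportedSquare k C s q.1 q.2.1 q.2.2}
      (gridTrace k C) where
  le_card _ hq := hq.le_card_gridTrace hk
  pairwise q hq r hr hqr := by
    rcases le_total q.1 r.1 with hle | hle
    · exact (gridTrace_disjoint_or_nested hk hr hqr hle).imp_right .inl
    · exact (gridTrace_disjoint_or_nested hk hq hqr.symm hle).imp (fun h => h.symm) .inr

end Supported

theorem supported_squares_count_general (k : ℤ) (hk : 0 < k)
    (C : Set (ℝ × ℝ)) (hC : C.Finite) (s : ℕ) (hs : 0 < s) :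
    {q : ℤ × ℤ × ℤ | IsSupportedSquare k C s q.1 q.2.1 q.2.2}.Finite ∧
    (Nat.card {q : ℤ × ℤ × ℤ | IsSupportedSquare k C s q.1 q.2.1 q.2.2} : ℝ) ≤
      2 * (Nat.card ↥C : ℝ) / s := by
  lift C to Finset (ℝ × ℝ) using hC
  have hlaminar := isSeparatedLaminar_gridTrace (C := C) (s := s) hk
  have htrace : ∀ q ∈ {q : ℤ × ℤ × ℤ | IsSupportedSquare k C s q.1 q.2.1 q.2.2},
      gridTrace k C q ⊆ C := fun _ _ _ hp => (mem_gridTrace.1 hp).1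
  refine ⟨hlaminar.finite hs htrace, ?_⟩
  have hcount := hlaminar.mul_ncard_le hs htrace
  rw [Nat.card_coe_set_eq, Nat.card_coe_set_eq, Set.ncard_coe_finset,
    le_div_iff₀' (mod_cast hs)]
  exact_mod_cast hcount

/-- **Counting supported squares**: for `k ≥ 3` and `s ≥ 2`, the number of
`s`-supported squares, over all levels `n ∈ ℤ` and positions `(i,j) ∈ ℤ²`,
is at most `2|C|/s`; in particular it is finite. -/
theorem supported_squares_count (k : ℤ) (hk : 3 ≤ k)
    (C : Set (ℝ × ℝ)) (hC : C.Finite) (s : ℕ) (hs : 2 ≤ s) :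
    {q : ℤ × ℤ × ℤ | IsSupportedSquare k C s q.1 q.2.1 q.2.2}.Finite ∧
    (Nat.card {q : ℤ × ℤ × ℤ | IsSupportedSquare k C s q.1 q.2.1 q.2.2} : ℝ) ≤
      2 * (Nat.card ↥C : ℝ) / s :=
  supported_squares_count_general k (by omega) C hC s (by omega)
end

section
/- Ohm's law / well-definedness of effective resistance: Let G=(V,E) be a finite network with positive conductances c_{xy} and let a ≠ z be vertices. Then there exists a constant R > 0 such that every voltage h (i.e., every function h : V → ℝ harmonic at all vertices x ∉ {a,z}) satisfies h(z) − h(a) = R · ‖θ_h‖, where θ_h(x,y) = c_{xy}(h(y) − h(x)) is the current flow associated with h and ‖θ_h‖ = Σ_{y∼a} θ_h(a,y) is its strength. In particular, for every non-constant voltage h the strength ‖θ_h‖ is nonzero and the ratio (h(z)−h(a))/‖θ_h‖ equals the same positive constant R. -/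
/-!
Ohm's law / well-definedness of effective resistance.

The finite network is a finite connected simple graph `G` with symmetric
conductances `c : V → V → ℝ`, positive on edges and (by convention) zero on
non-adjacent pairs, so that sums over all vertices agree with sums over
neighbours.  A voltage (with poles `a, z`) is a function `h : V → ℝ` harmonic
at every `x ∉ {a, z}`, i.e. `(∑_{y∼x} c_{xy}) · h x = ∑_{y∼x} c_{xy} · h y`.
The current flow of `h` is `θ_h(x,y) = c_{xy} (h y − h x)` and its strength is
`‖θ_h‖ = ∑_{y∼a} θ_h(a,y) = ∑ y, c a y * (h y − h a)`.
-/

open Finset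

variable {V : Type} [Fintype V] [DecidableEq V]

/-- `h` is a voltage with poles `a, z`: harmonic at every other vertex. -/
def IsVoltage (c : V → V → ℝ) (a z : V) (h : V → ℝ) : Prop :=
  ∀ x : V, x ≠ a → x ≠ z → (∑ y, c x y) * h x = ∑ y, c x y * h y

/-!
Green's identity turns the Dirichlet form of `g` against a voltage `h` into
`2 (g z - g a) ‖θ_h‖`: after subtracting the constant `g z`, only the pole `a` contributes.
The form is symmetric, so any two voltages satisfy `(g z - g a) ‖θ_h‖ = (h z - h a) ‖θ_g‖`, and
the ratio of potential difference to strength is the same for all voltages of nonzero strength.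
That ratio is positive because the form is positive semidefinite. A voltage of zero strength has
zero energy, hence is constant along edges. So if no voltage had nonzero strength, any `R` would
do, and the existence of nonconstant voltages need not be established.
-/

section CommRing

variable {W K : Type*} [Fintype W] [CommRing K]

/-- The net current flowing out of `x` along the current flow of `h`, that is, the weighted graph
Laplacian of `h` up to sign. At the pole `a` it is the strength of the flow. -/
def netFlow (c : W → W → K) (h : W → K) (x : W) : K :=
  ∑ y, c x y * (h y - h x)

/-- The Dirichlet form of the conductances `c`, a bilinear form whose diagonal is the energy.
The sum runs over ordered pairs, so every edge counts twice. -/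
def dirichletForm (c : W → W → K) (g h : W → K) : K :=
  ∑ x, ∑ y, c x y * ((g y - g x) * (h y - h x))

/-- Harmonicity at every vertex of `s`, expressed as conservation of current; a voltage with poles
`a` and `z` is a function harmonic on `{a, z}ᶜ`. -/
def IsHarmonicOn (c : W → W → K) (s : Set W) (h : W → K) : Prop :=
  ∀ x ∈ s, netFlow c h x = 0

variable {c : W → W → K} {a z : W} {g h : W → K}

lemma dirichletForm_comm (c : W → W → K) (g h : W → K) :
    dirichletForm c g h = dirichletForm c h g := by
  simp only [dirichletForm, mul_comm (g _ - g _)]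

lemma dirichletForm_sub_const (c : W → W → K) (g h : W → K) (k : K) :
    dirichletForm c (fun x ↦ g x - k) h = dirichletForm c g h := by
  simp only [dirichletForm, sub_sub_sub_cancel_right]

lemma dirichletForm_eq_neg_two_mul_sum_mul_netFlow (hsymm : ∀ x y, c x y = c y x)
    (g h : W → K) : dirichletForm c g h = -2 * ∑ x, g x * netFlow c h x := by
  have head_eq_neg_tail : ∑ x, ∑ y, g y * (c x y * (h y - h x)) =
      -∑ x, ∑ y, g x * (c x y * (h y - h x)) := by
    rw [sum_comm]
    simp only [← sum_neg_distrib]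
    refine sum_congr rfl fun x _ ↦ sum_congr rfl fun y _ ↦ ?_
    rw [hsymm y x]
    ring
  calc
    dirichletForm c g h
        = ∑ x, ∑ y, g y * (c x y * (h y - h x)) - ∑ x, ∑ y, g x * (c x y * (h y - h x)) := by
      simp only [dirichletForm, ← sum_sub_distrib]
      refine sum_congr rfl fun x _ ↦ sum_congr rfl fun y _ ↦ ?_
      ring
    _ = -2 * ∑ x, ∑ y, g x * (c x y * (h y - h x)) := by
      rw [head_eq_neg_tail]
      ring
    _ = -2 * ∑ x, g x * netFlow c h x := by
      simp only [netFlow, mul_sum]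

lemma IsHarmonicOn.dirichletForm_eq (hh : IsHarmonicOn c {a, z}ᶜ h)
    (hsymm : ∀ x y, c x y = c y x) (g : W → K) :
    dirichletForm c g h = 2 * ((g z - g a) * netFlow c h a) := by
  have sum_eq : ∑ x, (g x - g z) * netFlow c h x = (g a - g z) * netFlow c h a := by
    refine sum_eq_single a (fun x _ hxa ↦ ?_) (by simp)
    obtain rfl | hxz := eq_or_ne x z
    · rw [sub_self, zero_mul]
    · rw [hh x (by simp [hxa, hxz]), mul_zero]
  rw [← dirichletForm_sub_const c g h (g z),
    dirichletForm_eq_neg_two_mul_sum_mul_netFlow hsymm, sum_eq]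
  ring

lemma IsHarmonicOn.reciprocity [NoZeroDivisors K] [NeZero (2 : K)]
    (hg : IsHarmonicOn c {a, z}ᶜ g) (hh : IsHarmonicOn c {a, z}ᶜ h)
    (hsymm : ∀ x y, c x y = c y x) :
    (g z - g a) * netFlow c h a = (h z - h a) * netFlow c g a :=
  mul_left_cancel₀ two_ne_zero <| by
    rw [← hh.dirichletForm_eq hsymm, ← hg.dirichletForm_eq hsymm, dirichletForm_comm]

end CommRing

section OrderedRing

variable {W K : Type*} [Fintype W] [CommRing K] [LinearOrder K] [IsStrictOrderedRing K]
  {c : W → W → K} {a z : W} {h : W → K}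

lemma dirichletForm_self_nonneg (hnonneg : ∀ x y, 0 ≤ c x y) (h : W → K) :
    0 ≤ dirichletForm c h h :=
  sum_nonneg fun x _ ↦ sum_nonneg fun y _ ↦ mul_nonneg (hnonneg x y) (mul_self_nonneg _)

lemma dirichletForm_self_eq_zero_iff (hnonneg : ∀ x y, 0 ≤ c x y) :
    dirichletForm c h h = 0 ↔ ∀ x y, c x y * (h y - h x) = 0 := by
  have term_nonneg (x y : W) : 0 ≤ c x y * ((h y - h x) * (h y - h x)) :=
    mul_nonneg (hnonneg x y) (mul_self_nonneg _)
  simp [dirichletForm, sum_eq_zero_iff_of_nonneg, sum_nonneg, term_nonneg]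

lemma IsHarmonicOn.mul_netFlow_pos (hh : IsHarmonicOn c {a, z}ᶜ h)
    (hsymm : ∀ x y, c x y = c y x) (hnonneg : ∀ x y, 0 ≤ c x y) (hne : netFlow c h a ≠ 0) :
    0 < (h z - h a) * netFlow c h a := by
  have energy_ne_zero : dirichletForm c h h ≠ 0 := fun h0 ↦
    hne <| sum_eq_zero fun y _ ↦ (dirichletForm_self_eq_zero_iff hnonneg).1 h0 a y
  have energy_pos := (dirichletForm_self_nonneg hnonneg h).lt_of_ne' energy_ne_zero
  rw [hh.dirichletForm_eq hsymm] at energy_pos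
  exact pos_of_mul_pos_right energy_pos zero_le_two

lemma IsHarmonicOn.eq_of_netFlow_eq_zero {G : SimpleGraph W} (hh : IsHarmonicOn c {a, z}ᶜ h)
    (hsymm : ∀ x y, c x y = c y x) (hnonneg : ∀ x y, 0 ≤ c x y)
    (hpos : ∀ x y, G.Adj x y → 0 < c x y) (h0 : netFlow c h a = 0) {u v : W}
    (huv : G.Reachable u v) : h u = h v := by
  have energy_eq_zero : dirichletForm c h h = 0 := by
    rw [hh.dirichletForm_eq hsymm, h0, mul_zero, mul_zero]
  have eq_of_adj {x y : W} (hxy : G.Adj x y) : h x = h y :=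
    have current_eq_zero := (dirichletForm_self_eq_zero_iff hnonneg).1 energy_eq_zero x y
    (sub_eq_zero.1 <| (mul_eq_zero.1 current_eq_zero).resolve_left (hpos x y hxy).ne').symm
  obtain ⟨p⟩ := huv
  induction p with
  | nil => rfl
  | cons hxy _ ih => exact (eq_of_adj hxy).trans ih

end OrderedRing

theorem ohm_law_general {W K : Type*} [Fintype W] [Field K] [LinearOrder K]
    [IsStrictOrderedRing K] {G : SimpleGraph W} {c : W → W → K} {a z : W}
    (hsymm : ∀ x y, c x y = c y x) (hnonneg : ∀ x y, 0 ≤ c x y)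
    (hpos : ∀ x y, G.Adj x y → 0 < c x y) (haz : G.Reachable a z) :
    ∃ R : K, 0 < R ∧
      (∀ h : W → K, IsHarmonicOn c {a, z}ᶜ h → h z - h a = R * netFlow c h a) ∧
      (∀ h : W → K, IsHarmonicOn c {a, z}ᶜ h → ¬(∀ u v, G.Reachable u v → h u = h v) →
        netFlow c h a ≠ 0) := by
  have strength_ne_zero (h : W → K) (hh : IsHarmonicOn c {a, z}ᶜ h)
      (hne : ¬∀ u v, G.Reachable u v → h u = h v) : netFlow c h a ≠ 0 :=
    fun h0 ↦ hne fun _ _ ↦ hh.eq_of_netFlow_eq_zero hsymm hnonneg hpos h0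
  by_cases hex : ∃ g : W → K, IsHarmonicOn c {a, z}ᶜ g ∧ netFlow c g a ≠ 0
  · obtain ⟨g, hg, hne⟩ := hex
    refine ⟨(g z - g a) / netFlow c g a, ?_, fun h hh ↦ ?_, strength_ne_zero⟩
    · exact div_pos_iff.2 (mul_pos_iff.1 (hg.mul_netFlow_pos hsymm hnonneg hne))
    · rw [div_mul_eq_mul_div, eq_div_iff hne, hg.reciprocity hh hsymm]
  · push Not at hex
    refine ⟨1, one_pos, fun h hh ↦ ?_, strength_ne_zero⟩
    have h0 := hex h hh
    rw [h0, mul_zero, hh.eq_of_netFlow_eq_zero hsymm hnonneg hpos h0 haz, sub_self]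

lemma IsVoltage.isHarmonicOn {W : Type} [Fintype W] {c : W → W → ℝ} {a z : W} {h : W → ℝ}
    (hh : IsVoltage c a z h) : IsHarmonicOn c {a, z}ᶜ h := by
  intro x hx
  obtain ⟨hxa, hxz⟩ : x ≠ a ∧ x ≠ z := by simpa using hx
  simp only [netFlow, mul_sub, sum_sub_distrib, ← sum_mul, hh x hxa hxz, sub_self]

/-- **Ohm's law**: there is a positive constant `R` (the effective resistance)
such that every voltage `h` satisfies `h z − h a = R · ‖θ_h‖`; in particular
every non-constant voltage has nonzero current strength. -/
theorem ohm_law (G : SimpleGraph V) (hG : G.Connected)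
    (c : V → V → ℝ) (hsymm : ∀ x y, c x y = c y x)
    (hpos : ∀ x y, G.Adj x y → 0 < c x y)
    (hzero : ∀ x y, ¬G.Adj x y → c x y = 0)
    (a z : V) (haz : a ≠ z) :
    ∃ R : ℝ, 0 < R ∧
      (∀ h : V → ℝ, IsVoltage c a z h →
        h z - h a = R * ∑ y, c a y * (h y - h a)) ∧
      (∀ h : V → ℝ, IsVoltage c a z h → ¬(∀ u v, h u = h v) →
        ∑ y, c a y * (h y - h a) ≠ 0) := by
  have hnonneg (x y : V) : 0 ≤ c x y := by
    by_cases hxy : G.Adj x y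
    · exact (hpos x y hxy).le
    · exact (hzero x y hxy).ge
  obtain ⟨R, hR, ohm, strength_ne_zero⟩ :=
    ohm_law_general hsymm hnonneg hpos (hG.preconnected a z)
  exact ⟨R, hR, fun h hh ↦ ohm h hh.isHarmonicOn, fun h hh hne ↦
    strength_ne_zero h hh.isHarmonicOn fun hc ↦ hne fun u v ↦ hc u v (hG.preconnected u v)⟩
end
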